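/- Let D₀ = {(x₁,x₂) ∈ ℝ^d × ℝ^d : x₁ = x₂} be the diagonal and, for 0 ≤ r₁ < r₂, let C_{r₁,r₂} = {x̃ ∈ ℝ^{2d} : r₁ ≤ |x̃| ≤ r₂} and D_ε = {(x₁,x₂) : |x₁−x₂| ≤ ε}. Then for every compact set K ⊂ ℝ^{2d} \ D₀ there exist real numbers √2 < r < r', constants c₁, c₂, ε > 0, and a function R ∈ C₀^∞(ℝ^{2d}) vanishing in a neighbourhood of D₀, such that the Hessian satisfies ∇²R(x̃) ≥ c₁ 𝟙_K(x̃) − c₂ 𝟙_{C_{r,r'} \ D_ε}(x̃) as quadratic forms, for all x̃ ∈ ℝ^{2d}. -/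

import Mathlib

open Set

/-- The two-body configuration space `ℝ^{2d} = ℝ^d × ℝ^d` with its Euclidean (ℓ²) norm. -/
abbrev TwoBodyConf (d : ℕ) := WithLp 2 (EuclideanSpace ℝ (Fin d) × EuclideanSpace ℝ (Fin d))

/-- First particle coordinate. -/
def conf_fst {d : ℕ} (x : TwoBodyConf d) : EuclideanSpace ℝ (Fin d) :=
  (WithLp.equiv 2 (EuclideanSpace ℝ (Fin d) × EuclideanSpace ℝ (Fin d)) x).1

/-- Second particle coordinate. -/
def conf_snd {d : ℕ} (x : TwoBodyConf d) : EuclideanSpace ℝ (Fin d) :=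
  (WithLp.equiv 2 (EuclideanSpace ℝ (Fin d) × EuclideanSpace ℝ (Fin d)) x).2

theorem graf_phi : ∃ φ ψ ρ : ℝ → ℝ, ContDiff ℝ (⊤ : ℕ∞) φ ∧ (∀ t, HasDerivAt φ (ψ t) t) ∧
    (∀ t, HasDerivAt ψ (ρ t) t) ∧ (∀ t, 0 ≤ ρ t) ∧ (∀ t, 0 ≤ ψ t) ∧ (∀ t ≤ 0, φ t = 0) ∧
    0 < ψ 1 ∧ Monotone ψ := by
  have hc : Continuous expNegInvGlue := (expNegInvGlue.contDiff (n := 0)).continuous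
  set ψ : ℝ → ℝ := fun t => ∫ s in (0:ℝ)..t, expNegInvGlue s with hψ
  have h1 : ∀ t, HasDerivAt ψ (expNegInvGlue t) t := fun t => hc.integral_hasStrictDerivAt 0 t |>.hasDerivAt
  have hψc : Continuous ψ := continuous_iff_continuousAt.2 fun t => (h1 t).continuousAt
  set φ : ℝ → ℝ := fun t => ∫ s in (0:ℝ)..t, ψ s with hφ
  have h2 : ∀ t, HasDerivAt φ (ψ t) t := fun t => hψc.integral_hasStrictDerivAt 0 t |>.hasDerivAt
  have hmono : Monotone ψ := monotone_of_hasDerivAt_nonneg h1 (fun t => expNegInvGlue.nonneg t)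
  have hz : ∀ t ≤ 0, ψ t = 0 := by
    intro t ht
    have : ∫ s in (0:ℝ)..t, expNegInvGlue s = ∫ s in (0:ℝ)..t, (0:ℝ) := by
      apply intervalIntegral.integral_congr
      intro s hs
      rw [Set.uIcc_of_ge ht] at hs
      exact expNegInvGlue.zero_of_nonpos hs.2
    simpa [hψ] using this
  have hz2 : ∀ t ≤ 0, φ t = 0 := by
    intro t ht
    have : ∫ s in (0:ℝ)..t, ψ s = ∫ s in (0:ℝ)..t, (0:ℝ) := by
      apply intervalIntegral.integral_congr
      intro s hs
      rw [Set.uIcc_of_ge ht] at hs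
      exact hz s hs.2
    simpa [hφ] using this
  refine ⟨φ, ψ, expNegInvGlue, ?_, h2, h1, expNegInvGlue.nonneg, ?_, hz2, ?_, hmono⟩
  · have d1 : deriv ψ = expNegInvGlue := funext fun t => (h1 t).deriv
    have d2 : deriv φ = ψ := funext fun t => (h2 t).deriv
    have e1 : ContDiff ℝ (⊤ : ℕ∞) ψ := by
      rw [contDiff_infty_iff_deriv, d1]
      exact ⟨fun t => (h1 t).differentiableAt, expNegInvGlue.contDiff⟩
    rw [contDiff_infty_iff_deriv, d2]
    exact ⟨fun t => (h2 t).differentiableAt, e1⟩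
  · intro t
    rcases le_total t 0 with h | h
    · exact (hz t h).ge
    · rw [← hz 0 le_rfl]; exact hmono h
  · apply intervalIntegral.intervalIntegral_pos_of_pos_on (hc.intervalIntegrable _ _) _ one_pos
    intro s hs
    exact expNegInvGlue.pos_of_pos hs.1

theorem graf_hess {E F : Type*} [NormedAddCommGroup E] [InnerProductSpace ℝ E]
    [NormedAddCommGroup F] [InnerProductSpace ℝ F] (L : E →L[ℝ] F) (b c : ℝ) (hb : 0 ≤ b)
    (φ ψ ρ : ℝ → ℝ) (h2 : ∀ t, HasDerivAt φ (ψ t) t)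
    (h1 : ∀ t, HasDerivAt ψ (ρ t) t) (hρ : ∀ t, 0 ≤ ρ t) (hψ : ∀ t, 0 ≤ ψ t) (x v : E) :
    2 * ψ (‖x‖ ^ 2 + b * ‖L x‖ ^ 2 - c) * ‖v‖ ^ 2 ≤
      iteratedFDeriv ℝ 2 (fun y => φ (‖y‖ ^ 2 + b * ‖L y‖ ^ 2 - c)) x ![v, v] := by
  set g : E → ℝ := fun y => ‖y‖ ^ 2 + b * ‖L y‖ ^ 2 - c with hg
  let B : E →L[ℝ] E →L[ℝ] ℝ :=
    ((ContinuousLinearMap.compL ℝ E F ℝ).flip L).comp ((innerSL ℝ (E := F)).comp L)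
  let I : E →L[ℝ] E →L[ℝ] ℝ := innerSL ℝ (E := E)
  let A : E →L[ℝ] E →L[ℝ] ℝ := (2:ℝ) • I + (2 * b) • B
  have hB : ∀ y w, B y w = inner ℝ (L y) (L w) := fun y w => rfl
  have hA : ∀ y w, A y w = 2 * inner ℝ y w + 2 * b * inner ℝ (L y) (L w) := fun y w => rfl
  have hgd : ∀ y, HasFDerivAt g (A y) y := by
    intro y
    have a1 := (hasStrictFDerivAt_norm_sq y).hasFDerivAt
    have a2 := ((hasStrictFDerivAt_norm_sq (L y)).hasFDerivAt.comp y L.hasFDerivAt).const_mul b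
    refine ((a1.add a2).sub_const c).congr_fderiv ?_
    ext w
    simp [hA]
    ring
  have hF : fderiv ℝ (fun y => φ (g y)) = fun y => ψ (g y) • A y := by
    funext y
    exact ((h2 (g y)).comp_hasFDerivAt y (hgd y)).fderiv
  have hF2 := ((h1 (g x)).comp_hasFDerivAt x (hgd x)).smul (A.hasFDerivAt (x := x))
  rw [iteratedFDeriv_two_apply]
  change _ ≤ fderiv ℝ (fderiv ℝ (fun y => φ (g y))) x v v
  rw [hF]
  have hF3 : fderiv ℝ (fun y => ψ (g y) • A y) x = _ := hF2.fderiv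
  rw [hF3]
  simp only [ContinuousLinearMap.add_apply, ContinuousLinearMap.smul_apply,
    ContinuousLinearMap.smulRight_apply, smul_eq_mul, Function.comp]
  have e : A v v = 2 * ‖v‖ ^ 2 + 2 * b * ‖L v‖ ^ 2 := by
    rw [hA, real_inner_self_eq_norm_sq, real_inner_self_eq_norm_sq]
  rw [e]
  have p1 : 0 ≤ ρ (g x) * (A x v * A x v) := mul_nonneg (hρ _) (mul_self_nonneg _)
  have p2 : 0 ≤ ψ (g x) * (b * ‖L v‖ ^ 2) := mul_nonneg (hψ _) (by positivity)
  change 2 * ψ (g x) * ‖v‖ ^ 2 ≤ _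
  nlinarith

theorem graf_general {E F : Type*} [NormedAddCommGroup E] [InnerProductSpace ℝ E]
    [FiniteDimensional ℝ E]
    [NormedAddCommGroup F] [InnerProductSpace ℝ F] (L : E →L[ℝ] F) (K : Set E)
    (hK : IsCompact K) (hKdiag : ∀ x ∈ K, L x ≠ 0) :
    ∃ (r r' c₁ c₂ ε : ℝ) (R : E → ℝ),
      Real.sqrt 2 < r ∧ r < r' ∧ 0 < c₁ ∧ 0 < c₂ ∧ 0 < ε ∧
      ContDiff ℝ (⊤ : ℕ∞) R ∧ HasCompactSupport R ∧
      (∃ V : Set E, IsOpen V ∧ {x | L x = 0} ⊆ V ∧ ∀ x ∈ V, R x = 0) ∧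
      (∀ (x v : E),
        c₁ * K.indicator (fun _ => (1:ℝ)) x * ‖v‖ ^ 2
          - c₂ * Set.indicator
              {y : E | (r ≤ ‖y‖ ∧ ‖y‖ ≤ r') ∧ ε < ‖L y‖}
              (fun _ => (1:ℝ)) x * ‖v‖ ^ 2
        ≤ iteratedFDeriv ℝ 2 R x ![v, v]) := by
  obtain ⟨φ, ψ, ρ, hφ, h2, h1, hρ, hψ, hz, hψ1, hmono⟩ := graf_phi
  obtain ⟨r, hr, hKr⟩ := hK.isBounded.subset_ball_lt (Real.sqrt 2) 0
  have hr0 : 0 < r := (Real.sqrt_nonneg 2).trans_lt hr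
  obtain ⟨M, hM⟩ := hK.exists_bound_of_continuousOn (f := fun x => (‖L x‖ ^ 2)⁻¹)
    (ContinuousOn.inv₀ (by fun_prop) (fun x hx => by simpa using hKdiag x hx))
  set c : ℝ := (r + 1) ^ 2 + 1 with hc
  have hc0 : 0 < c := by positivity
  set b : ℝ := (c + 1) * max M 0 with hbdef
  have hb : 0 ≤ b := by positivity
  set g : E → ℝ := fun y => ‖y‖ ^ 2 + b * ‖L y‖ ^ 2 - c with hg
  have hgK : ∀ x ∈ K, 1 ≤ g x := by
    intro x hx
    have hp : 0 < ‖L x‖ ^ 2 := by have := hKdiag x hx; positivity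
    have h := (Real.le_norm_self _).trans (hM x hx) |>.trans (le_max_left M 0)
    have h' : 1 ≤ max M 0 * ‖L x‖ ^ 2 := (inv_le_iff_one_le_mul₀ hp).1 h
    have : (c + 1) * 1 ≤ (c + 1) * (max M 0 * ‖L x‖ ^ 2) := by gcongr
    simp only [hg, hbdef]
    nlinarith [sq_nonneg ‖x‖]
  set ε : ℝ := 1 / (b + 1) with hε
  have hε0 : 0 < ε := by positivity
  have hbε : b * ε ^ 2 < 1 := by
    rw [hε, div_pow, one_pow, mul_one_div, div_lt_one (by positivity)]
    nlinarith
  have hgc : ContDiff ℝ (⊤ : ℕ∞) g := by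
    have := L.contDiff (n := (⊤ : ℕ∞))
    exact ((contDiff_norm_sq ℝ).add (contDiff_const.mul (this.norm_sq ℝ))).sub contDiff_const
  let χ : ContDiffBump (0 : E) := ⟨r, r + 1, hr0, by linarith⟩
  have hχ : ContDiff ℝ (⊤ : ℕ∞) χ := χ.contDiff
  set R : E → ℝ := fun x => χ x * φ (g x) with hR
  have hRc : ContDiff ℝ (⊤ : ℕ∞) R := hχ.mul (hφ.comp hgc)
  have hRs : HasCompactSupport R := χ.hasCompactSupport.mul_right
  have hg0 : ∀ x, ‖x‖ ≤ r + 1 → ‖L x‖ ≤ ε → g x < 0 := by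
    intro x h h'
    have a1 : ‖x‖ ^ 2 ≤ (r + 1) ^ 2 := by gcongr
    have a2 : b * ‖L x‖ ^ 2 ≤ b * ε ^ 2 := by gcongr
    simp only [hg, hc]
    linarith
  have hR1 : ∀ x, g x < 0 → R x = 0 := fun x h => by simp [hR, hz _ h.le]
  have hR2 : ∀ x, r + 1 < ‖x‖ → R x = 0 := fun x h => by
    have : χ x = 0 := χ.zero_of_le_dist (by simpa [χ] using h.le)
    simp [hR, this]
  have ho1 : IsOpen {x | g x < 0} := isOpen_lt hgc.continuous continuous_const
  have ho2 : IsOpen {x : E | r + 1 < ‖x‖} := isOpen_lt continuous_const continuous_norm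
  have hD0 : ∀ U : Set E, IsOpen U → (∀ x ∈ U, R x = 0) → ∀ x ∈ U, ∀ v,
      iteratedFDeriv ℝ 2 R x ![v, v] = 0 := by
    intro U hU hUR x hx v
    have : R =ᶠ[nhds x] fun _ => (0:ℝ) := by
      filter_upwards [hU.mem_nhds hx] with y hy using hUR y hy
    rw [(this.iteratedFDeriv ℝ 2).eq_of_nhds]
    simp
  obtain ⟨C, hC⟩ := (hRs.iteratedFDeriv (𝕜 := ℝ) 2).exists_bound_of_continuous
    ((hRc.of_le (WithTop.coe_le_coe.2 (le_top : ((2 : ℕ) : ℕ∞) ≤ ⊤))).continuous_iteratedFDeriv le_rfl)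
  have hKn : ∀ x, r ≤ ‖x‖ → x ∉ K := fun x h hx => by
    have := hKr hx
    simp at this
    linarith
  refine ⟨r, r + 1, 2 * ψ 1, |C| + 1, ε, R, hr, by linarith, by positivity, by positivity, hε0,
    hRc, hRs, ⟨{x | g x < 0} ∪ {x | r + 1 < ‖x‖}, ho1.union ho2, ?_, ?_⟩, ?_⟩
  · intro x hx
    rcases lt_or_ge (r + 1) ‖x‖ with h | h
    · exact Or.inr h
    · exact Or.inl (hg0 x h (by rw [show L x = 0 from hx, norm_zero]; exact hε0.le))
  · rintro x (h | h)
    · exact hR1 x h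
    · exact hR2 x h
  · intro x v
    rcases lt_or_ge ‖x‖ r with h | h
    · rw [Set.indicator_of_notMem (s := {y : E | (r ≤ ‖y‖ ∧ ‖y‖ ≤ r + 1) ∧ ε < ‖L y‖})
        (fun hh => absurd hh.1.1 (not_le.2 h))]
      have : R =ᶠ[nhds x] fun y => φ (g y) := by
        filter_upwards [Metric.isOpen_ball.mem_nhds (show x ∈ Metric.ball (0:E) r by simpa using h)]
          with y hy
        have : χ y = 1 := χ.one_of_mem_closedBall (Metric.ball_subset_closedBall hy)
        simp [hR, this]
      rw [(this.iteratedFDeriv ℝ 2).eq_of_nhds]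
      refine le_trans ?_ (graf_hess L b c hb φ ψ ρ h2 h1 hρ hψ x v)
      by_cases hx : x ∈ K
      · have := hmono (hgK x hx)
        rw [Set.indicator_of_mem hx]
        simp only [mul_one, mul_zero, zero_mul, sub_zero]
        gcongr
      · rw [Set.indicator_of_notMem hx]
        have := hψ (g x)
        simp only [mul_zero, zero_mul, sub_zero]
        exact mul_nonneg (mul_nonneg zero_le_two this) (sq_nonneg _)
    · rw [Set.indicator_of_notMem (hKn x h)]
      by_cases hx : x ∈ {y : E | (r ≤ ‖y‖ ∧ ‖y‖ ≤ r + 1) ∧ ε < ‖L y‖}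
      · rw [Set.indicator_of_mem hx]
        have a := (iteratedFDeriv ℝ 2 R x).le_opNorm ![v, v]
        simp only [Fin.prod_univ_two, Matrix.cons_val_zero, Matrix.cons_val_one] at a
        have a2 := neg_le_of_abs_le a
        have a3 : ‖iteratedFDeriv ℝ 2 R x‖ * (‖v‖ * ‖v‖) ≤ |C| * (‖v‖ * ‖v‖) := by
          gcongr
          exact (hC x).trans (le_abs_self C)
        nlinarith [sq_nonneg ‖v‖]
      · rw [Set.indicator_of_notMem hx]
        have : iteratedFDeriv ℝ 2 R x ![v, v] = 0 := by
          rcases lt_or_ge (r + 1) ‖x‖ with h' | h'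
          · exact hD0 _ ho2 hR2 x h' v
          · refine hD0 _ ho1 hR1 x (hg0 x h' ?_) v
            by_contra h3
            exact hx ⟨⟨h, h'⟩, not_le.1 h3⟩
        rw [this]
        simp

/-- Construction of a Graf-type convex function adapted to the two-body problem
(Lemma 5.1 of Dybalski–Gérard):  for every compact `K ⊆ ℝ^{2d}` avoiding the diagonal
`D₀ = {x₁ = x₂}` there are `√2 < r < r'`, constants `c₁, c₂, ε > 0` and a smooth compactly
supported function `R` vanishing near `D₀` with
`∇²R(x̃) ≥ c₁ 𝟙_K(x̃) - c₂ 𝟙_{C_{r,r'} \ D_ε}(x̃)` in the sense of quadratic forms. -/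
theorem graf_function_two_body (d : ℕ) (K : Set (TwoBodyConf d))
    (hK : IsCompact K) (hKdiag : ∀ x ∈ K, conf_fst x ≠ conf_snd x) :
    ∃ (r r' c₁ c₂ ε : ℝ) (R : TwoBodyConf d → ℝ),
      Real.sqrt 2 < r ∧ r < r' ∧ 0 < c₁ ∧ 0 < c₂ ∧ 0 < ε ∧
      ContDiff ℝ (⊤ : ℕ∞) R ∧ HasCompactSupport R ∧
      (∃ V : Set (TwoBodyConf d), IsOpen V ∧ {x | conf_fst x = conf_snd x} ⊆ V ∧
        ∀ x ∈ V, R x = 0) ∧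
      (∀ (x v : TwoBodyConf d),
        c₁ * K.indicator (fun _ => (1:ℝ)) x * ‖v‖ ^ 2
          - c₂ * Set.indicator
              {y : TwoBodyConf d | (r ≤ ‖y‖ ∧ ‖y‖ ≤ r') ∧ ε < ‖conf_fst y - conf_snd y‖}
              (fun _ => (1:ℝ)) x * ‖v‖ ^ 2
        ≤ iteratedFDeriv ℝ 2 R x ![v, v]) := by
  let L : TwoBodyConf d →L[ℝ] EuclideanSpace ℝ (Fin d) :=
    ContinuousLinearMap.comp
      (ContinuousLinearMap.fst ℝ (EuclideanSpace ℝ (Fin d)) (EuclideanSpace ℝ (Fin d)) -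
        ContinuousLinearMap.snd ℝ (EuclideanSpace ℝ (Fin d)) (EuclideanSpace ℝ (Fin d)))
      (WithLp.prodContinuousLinearEquiv 2 ℝ (EuclideanSpace ℝ (Fin d))
        (EuclideanSpace ℝ (Fin d))).toContinuousLinearMap
  have hL : ∀ x, L x = conf_fst x - conf_snd x := fun x => rfl
  have h := graf_general L K hK (fun x hx => by rw [hL]; exact sub_ne_zero.2 (hKdiag x hx))
  simp only [hL, sub_eq_zero] at h
  exact h
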